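/- For every positive integer n, the number of pairs (x, y) ∈ ℤ² with x² + y² = n and x ≡ y ≡ 1 (mod 2) equals 4 ∑_{d|(n/2)} χ₋₄(d) − 4 ∑_{d|(n/4)} χ₋₄(d). -/

import Mathlib

/-!
Put `r n = #{z ∈ ℤ[i] | N z = n}`. Which primes divide a Gaussian integer of norm `p * n` is
governed by the splitting of `p`, and this gives
`r (p * n) = (1 + χ₋₄ p) * r n - χ₋₄ p * r (n / p)`, the last term being absent if `p ∤ n`.
The sum of `χ₋₄` over the divisors of `n` obeys the same recurrence, so the two functions are
proportional, and `r 1 = 4` fixes the constant (Jacobi's two-square theorem).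
A sum of two odd squares is even, and for `n = 2 * m` the representations by odd integers are the
Gaussian integers of norm `2 * m` that `2` does not divide, of which there are
`r (2 * m) - r (m / 2) = r m - r (m / 2)`.
-/

open Finset

/-- The Kronecker symbol `(-4/d)` for positive `d`. -/
def chiM4 (d : ℕ) : ℤ := if d % 4 = 1 then 1 else if d % 4 = 3 then -1 else 0

/-- `Sdiv χ n k = ∑_{d ∣ n/k} χ d`, interpreted as `0` when `k` does not divide `n`. -/
def Sdiv (χ : ℕ → ℤ) (n k : ℕ) : ℤ := if k ∣ n then ∑ d ∈ (n / k).divisors, χ d else 0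

/-- The recurrence `F (p * n) = (1 + f p) * F n - f p * F (n / p)` at every prime `p`, where
`F (n / p)` is read as `0` if `p ∤ n`; the two cases are separate fields so that no division
occurs. For completely multiplicative `f` it characterises the divisor sum of `f` up to a scalar. -/
structure IsHeckeRecurrent {R : Type*} [CommRing R] (f F : ℕ → R) : Prop where
  prime_mul : ∀ {p n : ℕ}, p.Prime → ¬ p ∣ n → F (p * n) = (1 + f p) * F n
  prime_mul_prime_mul : ∀ {p : ℕ} (n : ℕ), p.Prime →
    F (p * (p * n)) = (1 + f p) * F (p * n) - f p * F n

theorem IsHeckeRecurrent.mul_apply_one_comm {R : Type*} [CommRing R] {f F G : ℕ → R}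
    (hF : IsHeckeRecurrent f F) (hG : IsHeckeRecurrent f G) {n : ℕ} (hn : n ≠ 0) :
    F n * G 1 = F 1 * G n := by
  induction n using Nat.strong_induction_on with
  | _ n ih =>
    rcases eq_or_ne n 1 with rfl | hn1
    · rfl
    obtain ⟨p, hp, m, rfl⟩ := Nat.exists_prime_and_dvd hn1
    have lt_prime_mul {k : ℕ} (hk : k ≠ 0) : k < p * k :=
      lt_mul_of_one_lt_left (Nat.pos_of_ne_zero hk) hp.one_lt
    have hm : m ≠ 0 := right_ne_zero_of_mul hn
    have ihm := ih m (lt_prime_mul hm) hm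
    by_cases hpm : p ∣ m
    · obtain ⟨k, rfl⟩ := hpm
      have hk : k ≠ 0 := right_ne_zero_of_mul hm
      have ihk := ih k ((lt_prime_mul hk).trans (lt_prime_mul hm)) hk
      rw [hF.prime_mul_prime_mul k hp, hG.prime_mul_prime_mul k hp]
      linear_combination (1 + f p) * ihm - f p * ihk
    · rw [hF.prime_mul hp hpm, hG.prime_mul hp hpm]
      linear_combination (1 + f p) * ihm

section DivisorSum

theorem filter_not_dvd_divisors_prime_mul {p : ℕ} (hp : p.Prime) (n : ℕ) :
    {d ∈ (p * n).divisors | ¬ p ∣ d} = {d ∈ n.divisors | ¬ p ∣ d} := by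
  ext d
  simp only [mem_filter, Nat.mem_divisors, and_congr_left_iff]
  intro hpd
  have hcop : d.Coprime p := (hp.coprime_iff_not_dvd.2 hpd).symm
  rw [hcop.dvd_mul_left, mul_ne_zero_iff_left hp.ne_zero]

theorem filter_dvd_divisors_mul {k : ℕ} (hk : k ≠ 0) (n : ℕ) :
    {d ∈ (k * n).divisors | k ∣ d} = n.divisors.image (k * ·) := by
  ext d
  simp only [mem_filter, Nat.mem_divisors, mem_image]
  constructor
  · rintro ⟨⟨hd, hkn⟩, e, rfl⟩
    exact ⟨e, ⟨(mul_dvd_mul_iff_left hk).1 hd, right_ne_zero_of_mul hkn⟩, rfl⟩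
  · rintro ⟨e, ⟨he, hn⟩, rfl⟩
    exact ⟨⟨mul_dvd_mul_left k he, mul_ne_zero hk hn⟩, dvd_mul_right k e⟩

variable {R : Type*}

theorem sum_divisors_prime_mul [NonUnitalNonAssocSemiring R] {f : ℕ → R}
    (hf : ∀ a b, f (a * b) = f a * f b) {p : ℕ} (hp : p.Prime) (n : ℕ) :
    ∑ d ∈ (p * n).divisors, f d =
      f p * ∑ d ∈ n.divisors, f d + ∑ d ∈ n.divisors with ¬ p ∣ d, f d := by
  rw [← sum_filter_add_sum_filter_not _ (p ∣ ·), filter_not_dvd_divisors_prime_mul hp,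
    filter_dvd_divisors_mul hp.ne_zero, sum_image (mul_right_injective₀ hp.ne_zero).injOn, mul_sum]
  simp only [hf]

theorem isHeckeRecurrent_sum_divisors [CommRing R] {f : ℕ → R}
    (hf : ∀ a b, f (a * b) = f a * f b) : IsHeckeRecurrent f fun n ↦ ∑ d ∈ n.divisors, f d where
  prime_mul {p n} hp hpn := by
    have hfilter : {d ∈ n.divisors | ¬ p ∣ d} = n.divisors :=
      filter_true_of_mem fun d hd hpd ↦ hpn (hpd.trans (Nat.dvd_of_mem_divisors hd))
    rw [sum_divisors_prime_mul hf hp, hfilter]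
    ring
  prime_mul_prime_mul {p} n hp := by
    rw [sum_divisors_prime_mul hf hp (p * n), filter_not_dvd_divisors_prime_mul hp,
      sum_divisors_prime_mul hf hp n]
    ring

end DivisorSum

section NormFiber

variable {d : ℤ}

theorem re_im_injective : Function.Injective fun z : ℤ√d ↦ (z.re, z.im) :=
  fun _ _ h ↦ Zsqrtd.ext (congrArg Prod.fst h) (congrArg Prod.snd h)

/-- The elements of norm `n` in `ℤ√d`. For `d = -1` these are the representations of `n` as a sum
of two squares, so counting them turns Jacobi's theorem into a statement about divisibility in
`ℤ[i]`. -/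
def normFiber (d n : ℤ) : Set (ℤ√d) := {z | z.norm = n}

theorem abs_re_le_norm (hd : d ≤ 0) (z : ℤ√d) : |z.re| ≤ z.norm := by
  have hsq : |z.re| ≤ z.re ^ 2 := (Int.le_self_sq |z.re|).trans_eq (sq_abs z.re)
  rw [Zsqrtd.norm_def]
  nlinarith [mul_self_nonneg z.im]

theorem abs_im_le_norm (hd : d < 0) (z : ℤ√d) : |z.im| ≤ z.norm := by
  have hsq : |z.im| ≤ z.im ^ 2 := (Int.le_self_sq |z.im|).trans_eq (sq_abs z.im)
  rw [Zsqrtd.norm_def]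
  nlinarith [mul_self_nonneg z.re, mul_self_nonneg z.im]

theorem finite_normFiber (hd : d < 0) (n : ℤ) : (normFiber d n).Finite := by
  refine (((Set.finite_Icc (-n) n).prod (Set.finite_Icc (-n) n)).preimage
    re_im_injective.injOn).subset ?_
  rintro z rfl
  exact ⟨abs_le.1 (abs_re_le_norm hd.le z), abs_le.1 (abs_im_le_norm hd z)⟩

theorem mul_right_injective_of_norm_ne_zero {w : ℤ√d} (hw : w.norm ≠ 0) :
    Function.Injective (w * ·) := by
  intro u v (huv : w * u = w * v)
  refine Zsqrtd.eq_of_smul_eq_smul_left hw ?_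
  rw [Zsqrtd.norm_eq_mul_conj, mul_comm w, mul_assoc, mul_assoc, huv]

theorem ncard_normFiber_sep_dvd {w : ℤ√d} (hw : w.norm ≠ 0) (n : ℤ) :
    {z ∈ normFiber d (w.norm * n) | w ∣ z}.ncard = (normFiber d n).ncard := by
  rw [← Set.ncard_image_of_injective (normFiber d n) (mul_right_injective_of_norm_ne_zero hw)]
  refine congrArg Set.ncard (Set.ext fun z ↦ ?_)
  have hnorm (u : ℤ√d) : (w * u).norm = w.norm * n ↔ u.norm = n := by
    rw [Zsqrtd.norm_mul, mul_right_inj' hw]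
  constructor
  · rintro ⟨hz, u, rfl⟩
    exact ⟨u, (hnorm u).1 hz, rfl⟩
  · rintro ⟨u, hu, rfl⟩
    exact ⟨(hnorm u).2 hu, dvd_mul_right w u⟩

theorem ncard_normFiber_sep_intCast_dvd {k : ℤ} (hk : k ≠ 0) (n : ℤ) :
    {z ∈ normFiber d (k * (k * n)) | (k : ℤ√d) ∣ z}.ncard = (normFiber d n).ncard := by
  have hnorm : (k : ℤ√d).norm = k * k := Zsqrtd.norm_intCast k
  rw [← ncard_normFiber_sep_dvd (hnorm ▸ mul_ne_zero hk hk), hnorm, mul_assoc]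

theorem normFiber_sep_intCast_dvd_eq_empty {k n : ℤ} (hk : k ≠ 0) (hkn : ¬ k ∣ n) :
    {z ∈ normFiber d (k * n) | (k : ℤ√d) ∣ z} = ∅ := by
  refine Set.eq_empty_of_forall_notMem ?_
  rintro _ ⟨hz, u, rfl⟩
  have hnorm : k * (k * u.norm) = k * n := by
    rw [← mul_assoc, ← Zsqrtd.norm_intCast (d := d) k, ← Zsqrtd.norm_mul]
    exact hz
  exact hkn ⟨u.norm, (mul_left_cancel₀ hk hnorm).symm⟩

theorem dvd_or_star_dvd_of_dvd_norm {w z : ℤ√d} (hw : Prime w) (h : w ∣ (z.norm : ℤ√d)) :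
    w ∣ z ∨ star w ∣ z := by
  rw [Zsqrtd.norm_eq_mul_conj] at h
  refine (hw.dvd_or_dvd h).imp_right ?_
  rintro ⟨u, hu⟩
  exact ⟨star u, by rw [← star_star z, hu, star_mul']⟩

theorem dvd_or_star_dvd_of_mem_normFiber {w z : ℤ√d} {k n : ℤ} (hw : Prime w)
    (hwk : w ∣ (k : ℤ√d)) (hz : z ∈ normFiber d (k * n)) : w ∣ z ∨ star w ∣ z := by
  refine dvd_or_star_dvd_of_dvd_norm hw ?_
  rw [show z.norm = k * n from hz, Int.cast_mul]
  exact hwk.mul_right _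

theorem normFiber_sep_dvd_eq_self {w : ℤ√d} {k : ℤ} (hw : Prime w) (hwk : w ∣ (k : ℤ√d))
    (hstar : w ∣ star w) (n : ℤ) :
    {z ∈ normFiber d (k * n) | w ∣ z} = normFiber d (k * n) :=
  Set.sep_eq_self_iff_mem_true.2 fun _ hz ↦
    (dvd_or_star_dvd_of_mem_normFiber hw hwk hz).elim id hstar.trans

theorem dvd_intCast_norm (w : ℤ√d) : w ∣ (w.norm : ℤ√d) :=
  ⟨star w, Zsqrtd.norm_eq_mul_conj w⟩

theorem isCoprime_star_of_isCoprime_norm_two_mul_re {w : ℤ√d}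
    (h : IsCoprime w.norm (2 * w.re)) : IsCoprime w (star w) := by
  have htrace : ((2 * w.re : ℤ) : ℤ√d) = star w + w * 1 := by
    ext <;> simp [two_mul]
  have hcast : IsCoprime (w * star w) (star w + w * 1) := by
    rw [← Zsqrtd.norm_eq_mul_conj, ← htrace]
    exact h.intCast
  exact hcast.of_mul_left_left.of_add_mul_left_right

theorem ncard_normFiber_norm_mul_add_of_isCoprime_star (hd : d < 0) {w : ℤ√d} (hw : Prime w)
    (hstar : IsCoprime w (star w)) (n : ℤ) :
    (normFiber d (w.norm * n)).ncard +
        {z ∈ normFiber d (w.norm * n) | (w.norm : ℤ√d) ∣ z}.ncard =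
      2 * (normFiber d n).ncard := by
  set S := normFiber d (w.norm * n) with hS
  have hfin (P : ℤ√d → Prop) : {z ∈ S | P z}.Finite :=
    (finite_normFiber hd _).subset (Set.sep_subset _ _)
  have hunion : {z ∈ S | w ∣ z} ∪ {z ∈ S | star w ∣ z} = S := by
    rw [← Set.sep_or]
    exact Set.sep_eq_self_iff_mem_true.2 fun _ hz ↦
      dvd_or_star_dvd_of_mem_normFiber hw (dvd_intCast_norm w) hz
  have hinter : {z ∈ S | w ∣ z} ∩ {z ∈ S | star w ∣ z} = {z ∈ S | (w.norm : ℤ√d) ∣ z} := by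
    rw [← Set.sep_and, Zsqrtd.norm_eq_mul_conj]
    refine Set.sep_ext_iff.2 fun z _ ↦ ⟨fun h ↦ hstar.mul_dvd h.1 h.2, fun h ↦ ?_⟩
    exact ⟨(dvd_mul_right w _).trans h, (dvd_mul_left _ w).trans h⟩
  have hnorm : w.norm ≠ 0 := (Zsqrtd.norm_eq_zero_iff hd w).not.2 hw.ne_zero
  have hcard := Set.ncard_union_add_ncard_inter _ _ (hfin (w ∣ ·)) (hfin (star w ∣ ·))
  have hcard_star : {z ∈ S | star w ∣ z}.ncard = (normFiber d n).ncard := by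
    rw [hS, ← Zsqrtd.norm_conj w]
    exact ncard_normFiber_sep_dvd (by rwa [Zsqrtd.norm_conj]) n
  rw [hunion, hinter, ncard_normFiber_sep_dvd hnorm, hcard_star] at hcard
  rw [hcard, two_mul]

theorem irreducible_of_prime_norm {w : ℤ√d} (hw : Prime w.norm) : Irreducible w :=
  have : IsLocalHom (Zsqrtd.normMonoidHom (d := d)) :=
    ⟨fun z hz ↦ z.isUnit_iff_norm_isUnit.2 hz⟩
  Irreducible.of_map (f := Zsqrtd.normMonoidHom) hw.irreducible

end NormFiber

theorem chiM4_eq_χ₄ (d : ℕ) : chiM4 d = ZMod.χ₄ d := by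
  rw [chiM4, ZMod.χ₄_nat_eq_if_mod_four]
  split_ifs <;> omega

section GaussianInt

theorem ncard_normFiber_neg_one_one : (normFiber (-1) 1).ncard = 4 := by
  have hunits : normFiber (-1) 1 =
      (({⟨1, 0⟩, ⟨-1, 0⟩, ⟨0, 1⟩, ⟨0, -1⟩} : Finset GaussianInt) : Set GaussianInt) := by
    ext ⟨x, y⟩
    simp only [normFiber, Set.mem_ofPred_eq, Zsqrtd.norm_def, coe_insert, coe_singleton,
      Set.mem_insert_iff, Set.mem_singleton_iff, Zsqrtd.mk.injEq]
    constructor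
    · intro h
      have hnorm : (⟨x, y⟩ : GaussianInt).norm = 1 := h
      obtain ⟨hx₁, hx₂⟩ := abs_le.1 (hnorm ▸ abs_re_le_norm neg_one_lt_zero.le ⟨x, y⟩)
      obtain ⟨hy₁, hy₂⟩ := abs_le.1 (hnorm ▸ abs_im_le_norm neg_one_lt_zero ⟨x, y⟩)
      interval_cases x <;> interval_cases y <;> simp_all
    · rintro (⟨rfl, rfl⟩ | ⟨rfl, rfl⟩ | ⟨rfl, rfl⟩ | ⟨rfl, rfl⟩) <;> norm_num
  rw [hunits, Set.ncard_coe_finset]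
  decide

theorem ncard_normFiber_neg_one_two_mul (n : ℤ) :
    (normFiber (-1) (2 * n)).ncard = (normFiber (-1) n).ncard := by
  set w : GaussianInt := ⟨1, 1⟩ with hw
  have hnorm : w.norm = 2 := by simp [hw, Zsqrtd.norm_def]
  have hprime : Prime w := (irreducible_of_prime_norm (hnorm ▸ Int.prime_two)).prime
  have hstar : w ∣ star w := ⟨⟨0, -1⟩, by ext <;> simp [hw]⟩
  rw [← ncard_normFiber_sep_dvd (w := w) (by rw [hnorm]; exact two_ne_zero) n,
    normFiber_sep_dvd_eq_self hprime (dvd_intCast_norm w) hstar, hnorm]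

theorem not_dvd_of_sq_add_sq_eq_prime {p a b : ℕ} (hp : p.Prime) (h : a ^ 2 + b ^ 2 = p) :
    ¬ p ∣ a := by
  intro ha
  have hb : p ∣ b := hp.dvd_of_dvd_pow <|
    (Nat.dvd_add_right (ha.pow two_ne_zero)).1 (dvd_of_eq h.symm)
  have hsq : p ^ 2 ∣ p := by
    conv_rhs => rw [← h]
    exact dvd_add (pow_dvd_pow_of_dvd ha 2) (pow_dvd_pow_of_dvd hb 2)
  exact (Nat.le_of_dvd hp.pos hsq).not_gt (lt_self_pow₀ hp.one_lt one_lt_two)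

theorem exists_prime_isCoprime_star_norm_eq {p : ℕ} (hp : p.Prime) (hp1 : p % 4 = 1) :
    ∃ w : GaussianInt, Prime w ∧ IsCoprime w (star w) ∧ w.norm = p := by
  have := Fact.mk hp
  obtain ⟨a, b, hab⟩ := Nat.Prime.sq_add_sq (p := p) (by omega)
  have hnorm : (⟨a, b⟩ : GaussianInt).norm = p := by
    simp only [← hab, Zsqrtd.norm_def]
    push_cast
    ring
  have hpZ : Prime (p : ℤ) := Nat.prime_iff_prime_int.1 hp
  refine ⟨⟨a, b⟩, (irreducible_of_prime_norm (hnorm ▸ hpZ)).prime, ?_, hnorm⟩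
  refine isCoprime_star_of_isCoprime_norm_two_mul_re ?_
  have hp2 : ¬ p ∣ 2 := fun h ↦ by
    have := (Nat.prime_dvd_prime_iff_eq hp Nat.prime_two).1 h
    omega
  have hp2a : ¬ p ∣ 2 * a :=
    hp.dvd_mul.not.2 (not_or.2 ⟨hp2, not_dvd_of_sq_add_sq_eq_prime hp hab⟩)
  rw [hnorm]
  simpa using Nat.isCoprime_iff_coprime.2 (hp.coprime_iff_not_dvd.2 hp2a)

theorem ncard_normFiber_neg_one_prime_mul {p : ℕ} (hp : p.Prime) (n : ℤ) :
    ((normFiber (-1) (p * n)).ncard : ℤ) = (1 + ZMod.χ₄ p) * (normFiber (-1) n).ncard -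
      ZMod.χ₄ p * {z ∈ normFiber (-1) (p * n) | ((p : ℤ) : GaussianInt) ∣ z}.ncard := by
  have := Fact.mk hp
  rcases hp.eq_two_or_odd with rfl | hodd
  · have hχ : ZMod.χ₄ (2 : ℕ) = 0 := by decide
    rw [hχ, Nat.cast_two, ncard_normFiber_neg_one_two_mul]
    ring
  rcases (by omega : p % 4 = 1 ∨ p % 4 = 3) with hp1 | hp3
  · obtain ⟨w, hw, hstar, hnorm⟩ := exists_prime_isCoprime_star_norm_eq hp hp1
    have hsplit := ncard_normFiber_norm_mul_add_of_isCoprime_star neg_one_lt_zero hw hstar n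
    rw [hnorm] at hsplit
    rw [ZMod.χ₄_nat_one_mod_four hp1]
    zify at hsplit
    linear_combination hsplit
  · have hinert : Prime ((p : ℤ) : GaussianInt) :=
      mod_cast GaussianInt.prime_of_nat_prime_of_mod_four_eq_three p hp3
    rw [ZMod.χ₄_nat_three_mod_four hp3,
      normFiber_sep_dvd_eq_self hinert dvd_rfl (by rw [star_intCast])]
    ring

theorem isHeckeRecurrent_ncard_normFiber_neg_one :
    IsHeckeRecurrent (fun n : ℕ ↦ ZMod.χ₄ n) fun n ↦ ((normFiber (-1) n).ncard : ℤ) where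
  prime_mul {p n} hp hpn := by
    rw [Nat.cast_mul, ncard_normFiber_neg_one_prime_mul hp, normFiber_sep_intCast_dvd_eq_empty
      (mod_cast hp.ne_zero) (mod_cast hpn), Set.ncard_empty]
    ring
  prime_mul_prime_mul {p} n hp := by
    rw [Nat.cast_mul, ncard_normFiber_neg_one_prime_mul hp, Nat.cast_mul,
      ncard_normFiber_sep_intCast_dvd (mod_cast hp.ne_zero)]

theorem ncard_normFiber_neg_one_eq_four_mul_sum_divisors {n : ℕ} (hn : n ≠ 0) :
    ((normFiber (-1) n).ncard : ℤ) = 4 * ∑ d ∈ n.divisors, chiM4 d := by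
  have hsum := isHeckeRecurrent_sum_divisors (f := fun n : ℕ ↦ ZMod.χ₄ n)
    fun a b ↦ by rw [Nat.cast_mul, map_mul]
  simpa [ncard_normFiber_neg_one_one, chiM4_eq_χ₄] using
    isHeckeRecurrent_ncard_normFiber_neg_one.mul_apply_one_comm hsum hn

end GaussianInt

section OddRepresentations

theorem Sdiv_mul_left_self (χ : ℕ → ℤ) {k : ℕ} (hk : k ≠ 0) (n : ℕ) :
    Sdiv χ (k * n) k = ∑ d ∈ n.divisors, χ d := by
  rw [Sdiv, if_pos (dvd_mul_right k n), Nat.mul_div_cancel_left n (Nat.pos_of_ne_zero hk)]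

theorem Sdiv_mul_mul_left (χ : ℕ → ℤ) {l : ℕ} (hl : l ≠ 0) (n k : ℕ) :
    Sdiv χ (l * n) (l * k) = Sdiv χ n k := by
  simp only [Sdiv, mul_dvd_mul_iff_left hl, Nat.mul_div_mul_left n k (Nat.pos_of_ne_zero hl)]

theorem ncard_normFiber_neg_one_sep_natCast_dvd {k n : ℕ} (hk : k ≠ 0) (hn : n ≠ 0) :
    ({z ∈ normFiber (-1) (k * n) | ((k : ℤ) : GaussianInt) ∣ z}.ncard : ℤ) =
      4 * Sdiv chiM4 n k := by
  by_cases hkn : k ∣ n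
  · obtain ⟨m, rfl⟩ := hkn
    rw [Nat.cast_mul, ncard_normFiber_sep_intCast_dvd (mod_cast hk),
      ncard_normFiber_neg_one_eq_four_mul_sum_divisors (right_ne_zero_of_mul hn),
      Sdiv_mul_left_self chiM4 hk]
  · rw [normFiber_sep_intCast_dvd_eq_empty (mod_cast hk) (mod_cast hkn), Set.ncard_empty, Sdiv,
      if_neg hkn, Nat.cast_zero, mul_zero]

theorem not_two_dvd_iff_odd_of_even_norm {z : GaussianInt} (hz : Even z.norm) :
    ¬ ((2 : ℤ) : GaussianInt) ∣ z ↔ z.re % 2 = 1 ∧ z.im % 2 = 1 := by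
  have hparity : Even z.re ↔ Even z.im := by
    simpa [Zsqrtd.norm_def, Int.even_add, Int.even_mul] using hz
  rw [Int.even_iff, Int.even_iff] at hparity
  rw [Zsqrtd.intCast_dvd]
  omega

theorem image_normFiber_neg_one_sep_not_two_dvd (m : ℤ) :
    (fun z : GaussianInt ↦ (z.re, z.im)) ''
        {z ∈ normFiber (-1) (2 * m) | ¬ ((2 : ℤ) : GaussianInt) ∣ z} =
      {p | p.1 ^ 2 + p.2 ^ 2 = 2 * m ∧ p.1 % 2 = 1 ∧ p.2 % 2 = 1} := by
  ext ⟨x, y⟩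
  have hnorm : (⟨x, y⟩ : GaussianInt).norm = x ^ 2 + y ^ 2 := by
    rw [Zsqrtd.norm_def]
    ring
  constructor
  · rintro ⟨z, ⟨hz, hz2⟩, hxy⟩
    obtain ⟨rfl, rfl⟩ := Prod.ext_iff.1 hxy
    have heven : Even z.norm := ⟨m, (show z.norm = 2 * m from hz).trans (two_mul m)⟩
    exact ⟨hnorm.symm.trans hz, (not_two_dvd_iff_odd_of_even_norm heven).1 hz2⟩
  · rintro ⟨hxy, hodd⟩
    have hz := hnorm.trans hxy
    exact ⟨⟨x, y⟩, ⟨hz, (not_two_dvd_iff_odd_of_even_norm ⟨m, hz.trans (two_mul m)⟩).2 hodd⟩, rfl⟩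

theorem ncard_odd_sq_add_sq_eq_two_mul_add (m : ℤ) :
    {p : ℤ × ℤ | p.1 ^ 2 + p.2 ^ 2 = 2 * m ∧ p.1 % 2 = 1 ∧ p.2 % 2 = 1}.ncard +
        {z ∈ normFiber (-1) (2 * m) | ((2 : ℤ) : GaussianInt) ∣ z}.ncard =
      (normFiber (-1) m).ncard := by
  rw [← image_normFiber_neg_one_sep_not_two_dvd, Set.ncard_image_of_injective _ re_im_injective,
    ← ncard_normFiber_neg_one_two_mul, add_comm]
  exact Set.ncard_inter_add_ncard_sdiff_eq_ncard _ {z | ((2 : ℤ) : GaussianInt) ∣ z}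
    (finite_normFiber neg_one_lt_zero _)

theorem odd_sq_add_sq_eq_empty_of_odd {n : ℤ} (hn : Odd n) :
    {p : ℤ × ℤ | p.1 ^ 2 + p.2 ^ 2 = n ∧ p.1 % 2 = 1 ∧ p.2 % 2 = 1} = ∅ := by
  refine Set.eq_empty_of_forall_notMem ?_
  rintro ⟨x, y⟩ ⟨rfl, hx, hy⟩
  have hx_odd : Odd x := Int.odd_iff.2 hx
  have hy_odd : Odd y := Int.odd_iff.2 hy
  exact Int.not_even_iff_odd.2 hn (hx_odd.pow.add_odd hy_odd.pow)

end OddRepresentations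

theorem rep_x2_y2_x1mod2_y1mod2 (n : ℕ) (hn : 0 < n) :
    ({p : ℤ × ℤ | p.1 ^ 2 + p.2 ^ 2 = (n : ℤ) ∧ p.1 % 2 = 1 ∧ p.2 % 2 = 1}.ncard : ℤ) =
      4 * Sdiv chiM4 n 2 - 4 * Sdiv chiM4 n 4 := by
  obtain ⟨m, rfl | rfl⟩ := n.even_or_odd'
  · have hm : m ≠ 0 := by omega
    have hodd := ncard_odd_sq_add_sq_eq_two_mul_add m
    have hdvd := ncard_normFiber_neg_one_sep_natCast_dvd two_ne_zero hm
    have hjacobi := ncard_normFiber_neg_one_eq_four_mul_sum_divisors hm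
    have hSdiv_two : Sdiv chiM4 (2 * m) 2 = ∑ d ∈ m.divisors, chiM4 d :=
      Sdiv_mul_left_self chiM4 two_ne_zero m
    have hSdiv_four : Sdiv chiM4 (2 * m) 4 = Sdiv chiM4 m 2 :=
      Sdiv_mul_mul_left chiM4 two_ne_zero m 2
    rw [hSdiv_two, hSdiv_four, ← hjacobi, ← hdvd, ← hodd]
    push_cast
    ring
  · have hempty := odd_sq_add_sq_eq_empty_of_odd (n := (2 * m + 1 : ℕ)) (by simp)
    rw [hempty, Sdiv, Sdiv, if_neg (by omega), if_neg (by omega), Set.ncard_empty]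
    norm_num
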